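/- arXiv:1807.02089 — 2 statements merged into one kernel-verified Lean document; each statement's English description precedes it below -/
import Mathlib

section
/- Let d ≥ 1, λ > 0, m ≥ 1, t ≥ 1, g ≥ 0, τ ∈ [0,1], and θ ∈ ℝ^d with ‖θ‖₂ ≤ 1. Let A_1,…,A_{t−1} ∈ ℝ^d, X_1,…,X_{t−1} ∈ [0,1], and D_1,…,D_{t−1} ∈ ℕ. Define η_s = X_s − ⟨A_s,θ⟩, ε_s = 1{D_s ≤ m} − τ, and the windowed estimator θ̂ = V_t(λ)^{-1} Σ_{s=1}^{t−1} X_s·1{D_s ≤ min(m, t−s)}·A_s. If ‖Σ_{s=1}^{t−1} A_s X_s ε_s‖_{V_t(λ)^{-1}} ≤ g and ‖Σ_{s=1}^{t−1} A_s η_s‖_{V_t(λ)^{-1}} ≤ g, then ‖θ̂ − τ·θ‖_{V_t(λ)} ≤ 2g + √λ + Σ_{s=max(1,t−m)}^{t−1} ‖A_s‖_{V_t(λ)^{-1}}. -/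
open Finset Matrix

/-- `mnorm M x = √(xᵀ M x)`, the norm associated to a positive definite matrix `M`. -/
noncomputable def mnorm {d : ℕ} (M : Matrix (Fin d) (Fin d) ℝ) (x : Fin d → ℝ) : ℝ :=
  Real.sqrt (x ⬝ᵥ M.mulVec x)

/-- `Vmat A lam t = lam • I + ∑_{s=1}^{t-1} A_s A_sᵀ`. -/
noncomputable def Vmat {d : ℕ} (A : ℕ → Fin d → ℝ) (lam : ℝ) (t : ℕ) :
    Matrix (Fin d) (Fin d) ℝ :=
  lam • (1 : Matrix (Fin d) (Fin d) ℝ) + ∑ s ∈ Finset.Ico 1 t, vecMulVec (A s) (A s)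

open scoped MatrixOrder in
theorem mnorm_rep {d : ℕ} {M : Matrix (Fin d) (Fin d) ℝ} (hM : M.PosSemidef) :
    ∃ B : Matrix (Fin d) (Fin d) ℝ, ∀ x, mnorm M x = ‖WithLp.toLp 2 (B *ᵥ x)‖ := by
  obtain ⟨B, hB⟩ := CStarAlgebra.nonneg_iff_eq_star_mul_self.mp hM.nonneg
  refine ⟨B, fun x => ?_⟩
  rw [mnorm, EuclideanSpace.norm_eq, hB]
  congr 1
  rw [← Matrix.mulVec_mulVec, Matrix.dotProduct_mulVec, Matrix.star_eq_conjTranspose,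
    Matrix.conjTranspose_eq_transpose_of_trivial,
    Matrix.vecMul_transpose]
  simp [dotProduct, sq]

theorem mnorm_add_le {d : ℕ} {M : Matrix (Fin d) (Fin d) ℝ} (hM : M.PosSemidef)
    (x y : Fin d → ℝ) : mnorm M (x + y) ≤ mnorm M x + mnorm M y := by
  obtain ⟨B, hB⟩ := mnorm_rep hM
  simp only [hB, Matrix.mulVec_add, WithLp.toLp_add]
  exact norm_add_le _ _

theorem mnorm_smul {d : ℕ} {M : Matrix (Fin d) (Fin d) ℝ} (hM : M.PosSemidef)
    (c : ℝ) (x : Fin d → ℝ) : mnorm M (c • x) = |c| * mnorm M x := by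
  obtain ⟨B, hB⟩ := mnorm_rep hM
  simp only [hB, Matrix.mulVec_smul, WithLp.toLp_smul, norm_smul, Real.norm_eq_abs]

theorem mnorm_nonneg {d : ℕ} (M : Matrix (Fin d) (Fin d) ℝ) (x : Fin d → ℝ) : 0 ≤ mnorm M x :=
  Real.sqrt_nonneg _

theorem mnorm_sum_le {d : ℕ} {M : Matrix (Fin d) (Fin d) ℝ} (hM : M.PosSemidef)
    (S : Finset ℕ) (f : ℕ → Fin d → ℝ) :
    mnorm M (∑ s ∈ S, f s) ≤ ∑ s ∈ S, mnorm M (f s) := by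
  classical
  induction S using Finset.induction_on with
  | empty => simp [mnorm]
  | insert a S ha ih =>
    rw [Finset.sum_insert ha, Finset.sum_insert ha]
    exact (mnorm_add_le hM _ _).trans (by gcongr)

theorem Vmat_mulVec {d : ℕ} (A : ℕ → Fin d → ℝ) (lam : ℝ) (t : ℕ) (x : Fin d → ℝ) :
    Vmat A lam t *ᵥ x = lam • x + ∑ s ∈ Finset.Ico 1 t, (A s ⬝ᵥ x) • A s := by
  rw [Vmat, Matrix.add_mulVec, Matrix.smul_mulVec, Matrix.one_mulVec, Matrix.sum_mulVec]
  congr 1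
  refine Finset.sum_congr rfl fun s _ => ?_
  ext i
  simp [Matrix.vecMulVec_mulVec, mul_comm]

theorem Vmat_posDef {d : ℕ} (A : ℕ → Fin d → ℝ) (lam : ℝ) (hlam : 0 < lam) (t : ℕ) :
    (Vmat A lam t).PosDef := by
  unfold Vmat
  refine Matrix.PosDef.add_posSemidef (Matrix.PosDef.one.smul hlam) ?_
  refine Matrix.posSemidef_sum _ fun s _ => ?_
  simpa using Matrix.posSemidef_vecMulVec_self_star (A s)

theorem Vmat_quad {d : ℕ} (A : ℕ → Fin d → ℝ) (lam : ℝ) (t : ℕ) (x : Fin d → ℝ) :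
    lam * (x ⬝ᵥ x) ≤ x ⬝ᵥ Vmat A lam t *ᵥ x := by
  rw [Vmat_mulVec, dotProduct_add, dotProduct_smul, dotProduct_sum, smul_eq_mul]
  have : 0 ≤ ∑ s ∈ Finset.Ico 1 t, x ⬝ᵥ ((A s ⬝ᵥ x) • A s) := by
    refine Finset.sum_nonneg fun s _ => ?_
    rw [dotProduct_smul, smul_eq_mul, dotProduct_comm x]
    exact mul_self_nonneg _
  linarith

theorem cs {d : ℕ} (x y : Fin d → ℝ) : (x ⬝ᵥ y) ^ 2 ≤ (x ⬝ᵥ x) * (y ⬝ᵥ y) := by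
  have := Finset.sum_mul_sq_le_sq_mul_sq Finset.univ x y
  simpa [dotProduct, sq] using this

theorem mnorm_theta {d : ℕ} (A : ℕ → Fin d → ℝ) (lam : ℝ) (hlam : 0 < lam) (t : ℕ)
    (θ : Fin d → ℝ) (hθ : Real.sqrt (θ ⬝ᵥ θ) ≤ 1) :
    lam * mnorm (Vmat A lam t)⁻¹ θ ≤ Real.sqrt lam := by
  have hV := Vmat_posDef A lam hlam t
  have hu : IsUnit (Vmat A lam t).det := hV.det_pos.ne'.isUnit
  set u := (Vmat A lam t)⁻¹ *ᵥ θ with hudef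
  have hVu : Vmat A lam t *ᵥ u = θ := by
    rw [hudef, Matrix.mulVec_mulVec, Matrix.mul_nonsing_inv _ hu, Matrix.one_mulVec]
  have h1 := Vmat_quad A lam t u
  rw [hVu, dotProduct_comm u θ] at h1
  have h2 := cs θ u
  have h3 : θ ⬝ᵥ θ ≤ 1 := by
    have := (Real.sqrt_le_left (by norm_num : (0 : ℝ) ≤ 1)).mp hθ
    simpa using this
  have h4 : 0 ≤ u ⬝ᵥ u := by
    rw [dotProduct]; exact Finset.sum_nonneg fun i _ => mul_self_nonneg _
  have h5 : lam * (θ ⬝ᵥ u) ≤ 1 := by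
    have hq : 0 ≤ θ ⬝ᵥ u := le_trans (by positivity) h1
    by_contra hc
    push Not at hc
    have hqpos : 0 < θ ⬝ᵥ u := by
      by_contra h; nlinarith
    have a1 : (θ ⬝ᵥ u) ^ 2 ≤ u ⬝ᵥ u := h2.trans (mul_le_of_le_one_left h4 h3)
    have a2 := mul_le_mul_of_nonneg_left a1 hlam.le
    have a3 := mul_lt_mul_of_pos_right hc hqpos
    linarith [show lam * (θ ⬝ᵥ u) ^ 2 = lam * (θ ⬝ᵥ u) * (θ ⬝ᵥ u) by ring]
  rw [mnorm]
  apply Real.le_sqrt_of_sq_le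
  rw [mul_pow, Real.sq_sqrt (le_trans (by positivity) h1)]
  nlinarith

theorem mnorm_inv {d : ℕ} (V : Matrix (Fin d) (Fin d) ℝ) (hV : V.PosDef) (x : Fin d → ℝ) :
    mnorm V x = mnorm V⁻¹ (V *ᵥ x) := by
  have hu : IsUnit V.det := hV.det_pos.ne'.isUnit
  rw [mnorm, mnorm, Matrix.mulVec_mulVec, Matrix.nonsing_inv_mul _ hu, Matrix.one_mulVec,
    dotProduct_comm]

theorem deterministic_concentration_decomposition
    {d : ℕ} (hd : 1 ≤ d) (lam : ℝ) (hlam : 0 < lam)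
    (m t : ℕ) (hm : 1 ≤ m) (ht : 1 ≤ t)
    (g : ℝ) (hg : 0 ≤ g) (τ : ℝ) (hτ : τ ∈ Set.Icc (0 : ℝ) 1)
    (θ : Fin d → ℝ) (hθ : Real.sqrt (θ ⬝ᵥ θ) ≤ 1)
    (A : ℕ → Fin d → ℝ) (X : ℕ → ℝ) (hX : ∀ s, X s ∈ Set.Icc (0 : ℝ) 1)
    (D : ℕ → ℕ)
    (η : ℕ → ℝ) (hη : ∀ s, η s = X s - A s ⬝ᵥ θ)
    (ε : ℕ → ℝ) (hε : ∀ s, ε s = (if D s ≤ m then (1 : ℝ) else 0) - τ)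
    (θhat : Fin d → ℝ)
    (hθhat : θhat = (Vmat A lam t)⁻¹.mulVec
      (∑ s ∈ Finset.Ico 1 t, (X s * (if D s ≤ min m (t - s) then (1 : ℝ) else 0)) • A s))
    (h1 : mnorm (Vmat A lam t)⁻¹ (∑ s ∈ Finset.Ico 1 t, (X s * ε s) • A s) ≤ g)
    (h2 : mnorm (Vmat A lam t)⁻¹ (∑ s ∈ Finset.Ico 1 t, η s • A s) ≤ g) :
    mnorm (Vmat A lam t) (θhat - τ • θ) ≤
      2 * g + Real.sqrt lam +
        ∑ s ∈ Finset.Ico (max 1 (t - m)) t, mnorm (Vmat A lam t)⁻¹ (A s) := by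
  have hV := Vmat_posDef A lam hlam t
  have hu : IsUnit (Vmat A lam t).det := hV.det_pos.ne'.isUnit
  have hI : (Vmat A lam t)⁻¹.PosSemidef := hV.inv.posSemidef
  have hth := mnorm_theta A lam hlam t θ hθ
  obtain ⟨hτ0, hτ1⟩ := hτ
  rw [mnorm_inv _ hV]
  set b : ℕ → ℝ := fun s => X s * ((if D s ≤ min m (t - s) then (1 : ℝ) else 0) -
    (if D s ≤ m then (1 : ℝ) else 0)) with hb
  have key : Vmat A lam t *ᵥ (θhat - τ • θ) =
      (∑ s ∈ Finset.Ico 1 t, (X s * ε s) • A s) + τ • (∑ s ∈ Finset.Ico 1 t, η s • A s)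
      + (-(τ * lam)) • θ + ∑ s ∈ Finset.Ico 1 t, b s • A s := by
    rw [Matrix.mulVec_sub, hθhat, Matrix.mulVec_mulVec, Matrix.mul_nonsing_inv _ hu,
      Matrix.one_mulVec, Matrix.mulVec_smul, Vmat_mulVec, smul_add, ← sub_sub, sub_right_comm,
      Finset.smul_sum, Finset.smul_sum, ← Finset.sum_sub_distrib, smul_smul, neg_smul,
      add_right_comm, ← Finset.sum_add_distrib, ← sub_eq_add_neg,
      ← Finset.sum_add_distrib]
    congr 1
    refine Finset.sum_congr rfl fun s _ => ?_
    rw [hη, hε]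
    simp only [hb, smul_smul, ← add_smul, ← sub_smul]
    congr 1
    ring
  have hbsum : mnorm (Vmat A lam t)⁻¹ (∑ s ∈ Finset.Ico 1 t, b s • A s) ≤
      ∑ s ∈ Finset.Ico (max 1 (t - m)) t, mnorm (Vmat A lam t)⁻¹ (A s) := by
    have : ∑ s ∈ Finset.Ico 1 t, b s • A s =
        ∑ s ∈ Finset.Ico (max 1 (t - m)) t, b s • A s := by
      symm
      apply Finset.sum_subset
      · exact Finset.Ico_subset_Ico_left (le_max_left _ _)
      · intro s hs hs'
        simp only [Finset.mem_Ico] at hs hs'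
        have : min m (t - s) = m := by omega
        simp only [hb, this, sub_self, mul_zero, zero_smul]
    rw [this]
    refine (mnorm_sum_le hI _ _).trans (Finset.sum_le_sum fun s _ => ?_)
    rw [mnorm_smul hI]
    refine mul_le_of_le_one_left (mnorm_nonneg _ _) ?_
    obtain ⟨hx0, hx1⟩ := hX s
    simp only [hb]
    rw [abs_le]
    split_ifs <;> constructor <;> linarith
  rw [key]
  have e1 := mnorm_add_le hI ((∑ s ∈ Finset.Ico 1 t, (X s * ε s) • A s) + τ • (∑ s ∈ Finset.Ico 1 t, η s • A s)
      + (-(τ * lam)) • θ) (∑ s ∈ Finset.Ico 1 t, b s • A s)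
  have e2 := mnorm_add_le hI ((∑ s ∈ Finset.Ico 1 t, (X s * ε s) • A s) + τ • (∑ s ∈ Finset.Ico 1 t, η s • A s))
      ((-(τ * lam)) • θ)
  have e3 := mnorm_add_le hI (∑ s ∈ Finset.Ico 1 t, (X s * ε s) • A s) (τ • (∑ s ∈ Finset.Ico 1 t, η s • A s))
  rw [mnorm_smul hI, abs_of_nonneg hτ0] at e3
  rw [mnorm_smul hI, abs_neg, abs_of_nonneg (by positivity), mul_assoc] at e2
  have e4 := mul_le_of_le_one_left (mnorm_nonneg (Vmat A lam t)⁻¹ (∑ s ∈ Finset.Ico 1 t, η s • A s)) hτ1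
  have e5 := mul_le_of_le_one_left (mul_nonneg hlam.le (mnorm_nonneg (Vmat A lam t)⁻¹ θ)) hτ1
  linarith
end

section
/- Let d ≥ 1, λ ≥ 1, m ≥ 1, T ≥ 1, τ ∈ (0,1], and θ ∈ ℝ^d. For each t = 1,…,T let 𝒜_t ⊂ ℝ^d be a finite nonempty set with ‖a‖₂ ≤ 1 for all a ∈ 𝒜_t, let A_t ∈ 𝒜_t, let θ̂_t ∈ ℝ^d, and let f_1 ≤ f_2 ≤ … ≤ f_T be positive reals. Set α_t = 2 f_t + Σ_{s=max(1,t−m)}^{t−1} ‖A_s‖_{V_t(λ)^{-1}}. Suppose that for every t: (i) ‖θ̂_t − τ·θ‖_{V_t(λ)} ≤ α_t, and (ii) ⟨A_t, θ̂_t⟩ + α_t‖A_t‖_{V_t(λ)^{-1}} ≥ ⟨a, θ̂_t⟩ + α_t‖a‖_{V_t(λ)^{-1}} for all a ∈ 𝒜_t. Then Σ_{t=1}^T (max_{a∈𝒜_t}⟨θ,a⟩ − ⟨θ,A_t⟩) ≤ (4 f_T/τ)·√(2 d T log((dλ+T)/(dλ))) + (4 m d/τ)·log((dλ+T)/(dλ)).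 -/
open Finset Matrix

lemma q_nonneg {d : ℕ} {M : Matrix (Fin d) (Fin d) ℝ} (hM : M.PosSemidef) (x : Fin d → ℝ) :
    0 ≤ x ⬝ᵥ M *ᵥ x := by
  simpa using hM.dotProduct_mulVec_nonneg x

lemma q_symm {d : ℕ} {M : Matrix (Fin d) (Fin d) ℝ} (hM : M.IsHermitian) (x z : Fin d → ℝ) :
    x ⬝ᵥ M *ᵥ z = z ⬝ᵥ M *ᵥ x := by
  have h : Mᵀ = M := by simpa [Matrix.IsHermitian, conjTranspose_eq_transpose_of_trivial] using hM
  rw [dotProduct_mulVec, ← mulVec_transpose, h, dotProduct_comm]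

lemma q_cs {d : ℕ} {M : Matrix (Fin d) (Fin d) ℝ} (hM : M.PosSemidef) (x z : Fin d → ℝ) :
    (x ⬝ᵥ M *ᵥ z) ^ 2 ≤ (x ⬝ᵥ M *ᵥ x) * (z ⬝ᵥ M *ᵥ z) := by
  have h : ∀ r : ℝ, 0 ≤ (z ⬝ᵥ M *ᵥ z) * (r * r) + (2 * (x ⬝ᵥ M *ᵥ z)) * r + (x ⬝ᵥ M *ᵥ x) := by
    intro r
    have h1 := q_nonneg hM (x + r • z)
    simp only [mulVec_add, mulVec_smul, dotProduct_add, add_dotProduct, dotProduct_smul,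
      smul_dotProduct, smul_eq_mul] at h1
    rw [q_symm hM.1 z x] at h1
    linarith
  have := discrim_le_zero h
  unfold discrim at this
  nlinarith

lemma V_psd {d : ℕ} (A : ℕ → Fin d → ℝ) (S : Finset ℕ) :
    (∑ s ∈ S, vecMulVec (A s) (A s)).PosSemidef := by
  apply posSemidef_sum
  intro s _
  simpa using posSemidef_vecMulVec_self_star (A s)

lemma V_pd {d : ℕ} (A : ℕ → Fin d → ℝ) {lam : ℝ} (hl : 1 ≤ lam) (t : ℕ) :
    (Vmat A lam t).PosDef := by
  unfold Vmat
  exact (PosDef.one.smul (by linarith : (0:ℝ) < lam)).add_posSemidef (V_psd A _)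

lemma V_det {d : ℕ} (A : ℕ → Fin d → ℝ) {lam : ℝ} (hl : 1 ≤ lam) (t : ℕ) :
    0 < (Vmat A lam t).det := (V_pd A hl t).det_pos

lemma V_mul_inv {d : ℕ} {M : Matrix (Fin d) (Fin d) ℝ} (hM : M.PosDef) (x : Fin d → ℝ) :
    M *ᵥ (M⁻¹ *ᵥ x) = x := by
  rw [mulVec_mulVec, mul_nonsing_inv _ hM.det_pos.ne'.isUnit, one_mulVec]

lemma inv_q {d : ℕ} {M : Matrix (Fin d) (Fin d) ℝ} (hM : M.PosDef) (x : Fin d → ℝ) :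
    (M⁻¹ *ᵥ x) ⬝ᵥ M *ᵥ (M⁻¹ *ᵥ x) = x ⬝ᵥ M⁻¹ *ᵥ x := by
  rw [V_mul_inv hM, dotProduct_comm]

lemma cs_sq {d : ℕ} {M : Matrix (Fin d) (Fin d) ℝ} (hM : M.PosDef) (x y : Fin d → ℝ) :
    (x ⬝ᵥ y) ^ 2 ≤ (x ⬝ᵥ M *ᵥ x) * (y ⬝ᵥ M⁻¹ *ᵥ y) := by
  have := q_cs hM.posSemidef x (M⁻¹ *ᵥ y)
  rwa [inv_q hM, V_mul_inv hM] at this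

lemma cs_norm {d : ℕ} {M : Matrix (Fin d) (Fin d) ℝ} (hM : M.PosDef) (x y : Fin d → ℝ) :
    |x ⬝ᵥ y| ≤ mnorm M x * mnorm M⁻¹ y := by
  unfold mnorm
  rw [← Real.sqrt_mul (q_nonneg hM.posSemidef x)]
  exact Real.abs_le_sqrt (cs_sq hM x y)

lemma V_mono {d : ℕ} (A : ℕ → Fin d → ℝ) (lam : ℝ) {s t : ℕ} (h : s ≤ t) (x : Fin d → ℝ) :
    x ⬝ᵥ Vmat A lam s *ᵥ x ≤ x ⬝ᵥ Vmat A lam t *ᵥ x := by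
  have : Vmat A lam t = Vmat A lam s +
      ∑ i ∈ Finset.Ico 1 t \ Finset.Ico 1 s, vecMulVec (A i) (A i) := by
    unfold Vmat
    rw [add_assoc, add_comm (∑ s ∈ Finset.Ico 1 s, _),
      Finset.sum_sdiff (Finset.Ico_subset_Ico_right h)]
  rw [this, add_mulVec, dotProduct_add]
  have := q_nonneg (V_psd A (Finset.Ico 1 t \ Finset.Ico 1 s)) x
  linarith

lemma V_inv_anti {d : ℕ} (A : ℕ → Fin d → ℝ) {lam : ℝ} (hl : 1 ≤ lam) {s t : ℕ} (h : s ≤ t)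
    (x : Fin d → ℝ) :
    x ⬝ᵥ (Vmat A lam t)⁻¹ *ᵥ x ≤ x ⬝ᵥ (Vmat A lam s)⁻¹ *ᵥ x := by
  have h1 := cs_sq (V_pd A hl s) ((Vmat A lam t)⁻¹ *ᵥ x) x
  have h2 := V_mono A lam h ((Vmat A lam t)⁻¹ *ᵥ x)
  rw [inv_q (V_pd A hl t)] at h2
  rw [dotProduct_comm] at h1
  have h3 := q_nonneg (V_pd A hl t).inv.posSemidef x
  have h4 := q_nonneg (V_pd A hl s).inv.posSemidef x
  have h5 := mul_le_mul_of_nonneg_right h2 h4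
  rcases h3.eq_or_lt with h3 | h3
  · rw [← h3]; exact h4
  · nlinarith

lemma w_le_one {d : ℕ} (A : ℕ → Fin d → ℝ) {lam : ℝ} (hl : 1 ≤ lam) (t : ℕ)
    (x : Fin d → ℝ) (hx : x ⬝ᵥ x ≤ 1) : x ⬝ᵥ (Vmat A lam t)⁻¹ *ᵥ x ≤ 1 := by
  set u := (Vmat A lam t)⁻¹ *ᵥ x with hu
  have h1 := inv_q (V_pd A hl t) x
  rw [← hu] at h1
  have h2 := q_cs (PosSemidef.one : (1 : Matrix (Fin d) (Fin d) ℝ).PosSemidef) x u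
  simp only [one_mulVec] at h2
  have h3 := q_nonneg (V_psd A (Finset.Ico 1 t)) u
  have h4 : u ⬝ᵥ u ≤ x ⬝ᵥ u := by
    rw [← h1]
    simp only [Vmat, add_mulVec, dotProduct_add, smul_mulVec, one_mulVec, dotProduct_smul,
      smul_eq_mul]
    have : 0 ≤ u ⬝ᵥ u := by simpa using q_nonneg (PosSemidef.one : (1 : Matrix (Fin d) (Fin d) ℝ).PosSemidef) u
    nlinarith
  have h5 : 0 ≤ u ⬝ᵥ u := by simpa using q_nonneg (PosSemidef.one : (1 : Matrix (Fin d) (Fin d) ℝ).PosSemidef) u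
  nlinarith

lemma V_det_succ {d : ℕ} (A : ℕ → Fin d → ℝ) {lam : ℝ} (hl : 1 ≤ lam) {t : ℕ} (ht : 1 ≤ t) :
    (Vmat A lam (t + 1)).det =
      (Vmat A lam t).det * (1 + A t ⬝ᵥ (Vmat A lam t)⁻¹ *ᵥ A t) := by
  have h : Vmat A lam (t + 1) = Vmat A lam t + replicateCol Unit (A t) * replicateRow Unit (A t) := by
    unfold Vmat
    rw [Finset.sum_Ico_succ_top ht, add_assoc, vecMulVec_eq Unit]
  rw [h, det_add_replicateCol_mul_replicateRow (V_det A hl t).ne'.isUnit]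
  congr 1
  rw [det_unique, Matrix.mul_assoc, ← replicateCol_mulVec, replicateRow_mul_replicateCol]
  simp

lemma log_det_le {d : ℕ} (hd : 1 ≤ d) {M : Matrix (Fin d) (Fin d) ℝ} (hM : M.PosDef) {c : ℝ}
    (hc : 0 < c) (htr : M.trace ≤ d * c) : Real.log M.det ≤ d * Real.log c := by
  have h1 : M.det = ∏ i, hM.1.eigenvalues i := by simpa using hM.1.det_eq_prod_eigenvalues
  have h2 : M.trace = ∑ i, hM.1.eigenvalues i := by simpa using hM.1.trace_eq_sum_eigenvalues
  rw [h1, Real.log_prod (fun i _ => (hM.eigenvalues_pos i).ne')]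
  have h3 : ∀ i, Real.log (hM.1.eigenvalues i) ≤ Real.log c + (hM.1.eigenvalues i / c - 1) := by
    intro i
    have := Real.log_le_sub_one_of_pos (div_pos (hM.eigenvalues_pos i) hc)
    rw [Real.log_div (hM.eigenvalues_pos i).ne' hc.ne'] at this
    linarith
  have h4 := Finset.sum_le_sum (fun i (_ : i ∈ Finset.univ) => h3 i)
  simp only [Finset.sum_add_distrib, Finset.sum_sub_distrib, ← Finset.sum_div, ← h2] at h4
  simp at h4
  have : M.trace / c ≤ d := by rwa [div_le_iff₀ hc]
  linarith

lemma potential {d : ℕ} (hd : 1 ≤ d) (A : ℕ → Fin d → ℝ) {lam : ℝ} (hl : 1 ≤ lam) (T : ℕ)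
    (hA : ∀ t ∈ Finset.Icc 1 T, A t ⬝ᵥ A t ≤ 1) :
    ∑ t ∈ Finset.Icc 1 T, A t ⬝ᵥ (Vmat A lam t)⁻¹ *ᵥ A t ≤
      2 * (d * Real.log ((d * lam + T) / (d * lam))) := by
  have hd' : (0:ℝ) < d := by exact_mod_cast hd
  have h1 : ∀ n ≤ T, ∑ t ∈ Finset.Icc 1 n, A t ⬝ᵥ (Vmat A lam t)⁻¹ *ᵥ A t ≤
      2 * (Real.log (Vmat A lam (n + 1)).det - Real.log (Vmat A lam 1).det) := by
    intro n
    induction n with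
    | zero => simp
    | succ n ih =>
      intro hn
      have ih := ih (by omega)
      rw [Finset.sum_Icc_succ_top (by omega), V_det_succ A hl (t := n + 1) (by omega)]
      have hq := q_nonneg (V_pd A hl (n+1)).inv.posSemidef (A (n+1))
      have hq1 := w_le_one A hl (n+1) (A (n+1)) (hA _ (by simp; omega))
      rw [Real.log_mul (V_det A hl _).ne' (by linarith)]
      have := Real.one_sub_inv_le_log_of_pos (x := 1 + A (n+1) ⬝ᵥ (Vmat A lam (n+1))⁻¹ *ᵥ A (n+1)) (by linarith)
      generalize A (n+1) ⬝ᵥ (Vmat A lam (n+1))⁻¹ *ᵥ A (n+1) = q at *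
      have h2 : q / 2 ≤ 1 - (1 + q)⁻¹ := by
        have : 1 - (1 + q)⁻¹ = q / (1 + q) := by field_simp; ring
        rw [this]
        exact div_le_div_of_nonneg_left hq (by linarith) (by linarith)
      linarith
  have h2 := h1 T le_rfl
  have h3 : Real.log (Vmat A lam 1).det = d * Real.log lam := by
    simp [Vmat, det_smul]
  have h4 : Real.log (Vmat A lam (T+1)).det ≤ d * Real.log (lam + T / d) := by
    apply log_det_le hd (V_pd A hl _) (by positivity)
    simp only [Vmat, trace_add, trace_smul, trace_one, trace_sum, trace_vecMulVec, Fintype.card_fin, smul_eq_mul]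
    have : ∑ t ∈ Finset.Ico 1 (T+1), A t ⬝ᵥ A t ≤ ∑ t ∈ Finset.Ico 1 (T+1), (1:ℝ) :=
      Finset.sum_le_sum (fun t ht => hA t (by simp at ht ⊢; omega))
    simp at this
    have e : (d:ℝ) * (lam + T / d) = lam * d + T := by field_simp
    rw [e]; linarith
  have e : ((d:ℝ) * lam + T) / (d * lam) = (lam + T / d) / lam := by field_simp
  rw [e, Real.log_div (by positivity) (by positivity)]
  linarith

lemma window (m T : ℕ) (w : ℕ → ℝ) (hw : ∀ t, 0 ≤ w t) :
    ∑ t ∈ Finset.Icc 1 T, ∑ s ∈ Finset.Ico (max 1 (t - m)) t, (w s + w t) ≤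
      2 * m * ∑ t ∈ Finset.Icc 1 T, w t := by
  simp only [Finset.sum_add_distrib]
  have h1 : ∑ t ∈ Finset.Icc 1 T, ∑ s ∈ Finset.Ico (max 1 (t - m)) t, w t ≤
      m * ∑ t ∈ Finset.Icc 1 T, w t := by
    rw [Finset.mul_sum]
    apply Finset.sum_le_sum
    intro t _
    rw [Finset.sum_const, nsmul_eq_mul, Nat.card_Ico]
    apply mul_le_mul_of_nonneg_right _ (hw t)
    exact_mod_cast (by omega : t - max 1 (t - m) ≤ m)
  have h2 : ∑ t ∈ Finset.Icc 1 T, ∑ s ∈ Finset.Ico (max 1 (t - m)) t, w s ≤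
      m * ∑ t ∈ Finset.Icc 1 T, w t := by
    rw [Finset.sum_comm' (t' := Finset.Icc 1 T)
      (s' := fun s => (Finset.Icc 1 T).filter (fun t => s ∈ Finset.Ico (max 1 (t - m)) t))
      (by intro x y; simp only [Finset.mem_filter, Finset.mem_Icc, Finset.mem_Ico]; omega), Finset.mul_sum]
    apply Finset.sum_le_sum
    intro s _
    rw [Finset.sum_const, nsmul_eq_mul]
    apply mul_le_mul_of_nonneg_right _ (hw s)
    have : ((Finset.Icc 1 T).filter (fun t => s ∈ Finset.Ico (max 1 (t - m)) t)).card ≤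
        (Finset.Ioc s (s + m)).card := by
      apply Finset.card_le_card
      intro t
      simp only [Finset.mem_filter, Finset.mem_Icc, Finset.mem_Ico, Finset.mem_Ioc]
      omega
    rw [Nat.card_Ioc] at this
    exact_mod_cast (by omega)
  linarith

theorem deterministic_regret_bound_on_good_event
    {d : ℕ} (hd : 1 ≤ d) (lam : ℝ) (hlam : 1 ≤ lam)
    (m T : ℕ) (hm : 1 ≤ m) (hT : 1 ≤ T)
    (τ : ℝ) (hτ : τ ∈ Set.Ioc (0 : ℝ) 1)
    (θ : Fin d → ℝ)
    (𝒜 : ℕ → Finset (Fin d → ℝ)) (h𝒜ne : ∀ t, (𝒜 t).Nonempty)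
    (h𝒜norm : ∀ t ∈ Finset.Icc 1 T, ∀ a ∈ 𝒜 t, Real.sqrt (a ⬝ᵥ a) ≤ 1)
    (A : ℕ → Fin d → ℝ) (hAmem : ∀ t ∈ Finset.Icc 1 T, A t ∈ 𝒜 t)
    (θhat : ℕ → Fin d → ℝ)
    (f : ℕ → ℝ) (hfpos : ∀ t ∈ Finset.Icc 1 T, 0 < f t)
    (hfmono : ∀ s t : ℕ, 1 ≤ s → s ≤ t → t ≤ T → f s ≤ f t)
    (α : ℕ → ℝ)
    (hα : ∀ t, α t = 2 * f t +
      ∑ s ∈ Finset.Ico (max 1 (t - m)) t, mnorm (Vmat A lam t)⁻¹ (A s))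
    (hconc : ∀ t ∈ Finset.Icc 1 T, mnorm (Vmat A lam t) (θhat t - τ • θ) ≤ α t)
    (hopt : ∀ t ∈ Finset.Icc 1 T, ∀ a ∈ 𝒜 t,
      a ⬝ᵥ θhat t + α t * mnorm (Vmat A lam t)⁻¹ a ≤
        A t ⬝ᵥ θhat t + α t * mnorm (Vmat A lam t)⁻¹ (A t)) :
    ∑ t ∈ Finset.Icc 1 T, ((𝒜 t).sup' (h𝒜ne t) (fun a => θ ⬝ᵥ a) - θ ⬝ᵥ A t) ≤
      (4 * f T / τ) * Real.sqrt (2 * d * T * Real.log ((d * lam + T) / (d * lam))) +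
        (4 * m * d / τ) * Real.log ((d * lam + T) / (d * lam)) := by
  obtain ⟨hτ0, _⟩ := hτ
  have hAn : ∀ t ∈ Finset.Icc 1 T, A t ⬝ᵥ A t ≤ 1 := fun t ht =>
    (Real.sqrt_le_one).1 (h𝒜norm t ht _ (hAmem t ht))
  have hpot := potential hd A hlam T hAn
  set L := Real.log ((d * lam + T) / (d * lam)) with hL
  set w : ℕ → ℝ := fun t => mnorm (Vmat A lam t)⁻¹ (A t) with hw
  have hw0 : ∀ t, 0 ≤ w t := fun t => Real.sqrt_nonneg _
  have hwsq : ∀ t, w t ^ 2 = A t ⬝ᵥ (Vmat A lam t)⁻¹ *ᵥ A t := fun t =>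
    Real.sq_sqrt (q_nonneg (V_pd A hlam t).inv.posSemidef _)
  simp only [← hwsq] at hpot
  have hfT : 0 < f T := hfpos T (by simp; omega)
  have hstep : ∀ t ∈ Finset.Icc 1 T,
      (𝒜 t).sup' (h𝒜ne t) (fun a => θ ⬝ᵥ a) - θ ⬝ᵥ A t ≤ (2 / τ) * (α t * w t) := by
    intro t ht
    rw [sub_le_iff_le_add]
    apply Finset.sup'_le
    intro a ha
    have h1 := hopt t ht a ha
    have hc := hconc t ht
    have hn : ∀ x, |(θhat t - τ • θ) ⬝ᵥ x| ≤ α t * mnorm (Vmat A lam t)⁻¹ x := fun x =>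
      (cs_norm (V_pd A hlam t) _ x).trans
        (mul_le_mul_of_nonneg_right hc (Real.sqrt_nonneg _))
    have h2 := (abs_le.1 (hn a)).1
    have h3 := (abs_le.1 (hn (A t))).2
    simp only [sub_dotProduct, smul_dotProduct, smul_eq_mul] at h2 h3
    rw [dotProduct_comm (θhat t)] at h2 h3
    have h4 : τ * (θ ⬝ᵥ a) ≤ 2 * (α t * w t) + τ * (θ ⬝ᵥ A t) := by
      simp only [hw]; linarith
    have h5 : θ ⬝ᵥ a ≤ (2 * (α t * w t) + τ * (θ ⬝ᵥ A t)) / τ := by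
      rw [le_div_iff₀ hτ0]; linarith
    refine h5.trans (le_of_eq ?_)
    field_simp
  have hterm : ∀ t ∈ Finset.Icc 1 T, α t * w t ≤ 2 * f T * w t +
      (1/2) * ∑ s ∈ Finset.Ico (max 1 (t - m)) t, (w s ^ 2 + w t ^ 2) := by
    intro t ht
    have ht' := Finset.mem_Icc.1 ht
    rw [hα, add_mul, Finset.sum_mul, Finset.mul_sum]
    apply add_le_add
    · have := hfmono t T ht'.1 ht'.2 le_rfl
      exact mul_le_mul_of_nonneg_right (by linarith) (hw0 t)
    · apply Finset.sum_le_sum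
      intro s hs
      have hs' := (Finset.mem_Ico.1 hs).2
      have h1 : mnorm (Vmat A lam t)⁻¹ (A s) ≤ w s :=
        Real.sqrt_le_sqrt (V_inv_anti A hlam hs'.le (A s))
      have h2 := mul_le_mul_of_nonneg_right h1 (hw0 t)
      nlinarith [sq_nonneg (w s - w t)]
  have hwin := window m T (fun t => w t ^ 2) (fun t => sq_nonneg _)
  have hcs : ∑ t ∈ Finset.Icc 1 T, w t ≤ Real.sqrt (2 * d * T * L) := by
    apply Real.le_sqrt_of_sq_le
    have := sq_sum_le_card_mul_sum_sq (s := Finset.Icc 1 T) (f := w)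
    simp only [Nat.card_Icc, Nat.add_sub_cancel] at this
    have h2 := mul_le_mul_of_nonneg_left hpot (Nat.cast_nonneg (α := ℝ) T)
    linarith
  have hsum : ∑ t ∈ Finset.Icc 1 T, α t * w t ≤
      2 * f T * Real.sqrt (2 * d * T * L) + 2 * m * d * L := by
    refine (Finset.sum_le_sum hterm).trans ?_
    rw [Finset.sum_add_distrib, ← Finset.mul_sum, ← Finset.mul_sum]
    have h1 := mul_le_mul_of_nonneg_left hcs (by positivity : 0 ≤ 2 * f T)
    have h2 := mul_le_mul_of_nonneg_left hpot (by positivity : (0:ℝ) ≤ m)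
    linarith
  refine (Finset.sum_le_sum hstep).trans ?_
  rw [← Finset.mul_sum]
  refine (mul_le_mul_of_nonneg_left hsum (by positivity)).trans (le_of_eq ?_)
  ring
end
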